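/- arXiv:2310.15820 — 3 statements merged into one kernel-verified Lean document; each statement's English description precedes it below -/
import Mathlib

section
/- Let 𝔽 be a finite field of odd characteristic, let m ≥ 1 and 0 ≤ i ≤ m be integers, and let δ ∈ GL_m(𝔽) be the diagonal matrix whose first i diagonal entries equal −1 and whose remaining m − i diagonal entries equal 1. Then there exists α ∈ GL_m(𝔽) with δ·α·δ⁻¹ = −α (the entrywise negation of α) if and only if m = 2i. Moreover, when m = 2i, the block matrix w = [[0, Id_i],[Id_i, 0]] ∈ GL_m(𝔽) satisfies δ·w·δ⁻¹ = −w. -/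
/-!
Let `δ` be a diagonal matrix of signs. The `(a, b)` entry of `δαδ⁻¹` is `α a b` or `-α a b`
according as the signs at `a` and `b` agree or not, so `δαδ⁻¹ = -α` says that `2` kills the entries
between equal signs. If `2 * α.det ≠ 0`, then some term `∏ j, α (σ j) j` of the Leibniz expansion is
not killed by `2`, hence none of its factors is either, and the permutation `σ` exchanges the two
sign classes, which must therefore have the same size. Conversely, the permutation matrix of any
permutation exchanging the two classes is negated by `δ`.
-/

theorem exists_perm_forall_mul_apply_ne_zero {n R : Type*} [Fintype n] [DecidableEq n]
    [CommRing R] {c : R} {α : Matrix n n R} (h : c * α.det ≠ 0) :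
    ∃ σ : Equiv.Perm n, ∀ j, c * α (σ j) j ≠ 0 := by
  rw [Matrix.det_apply, Finset.mul_sum] at h
  obtain ⟨σ, -, hσ⟩ := Finset.exists_ne_zero_of_sum_ne_zero h
  refine ⟨σ, fun j hj => hσ ?_⟩
  have hprod : c * ∏ k, α (σ k) k = 0 :=
    zero_dvd_iff.mp (hj ▸ mul_dvd_mul_left c (Finset.dvd_prod_of_mem _ (Finset.mem_univ j)))
  rw [mul_smul_comm, hprod, smul_zero]

theorem isUnit_permMatrix {n R : Type*} [Fintype n] [DecidableEq n] [Semiring R]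
    (σ : Equiv.Perm n) : IsUnit (σ.permMatrix R) := by
  simpa using (Group.isUnit σ⁻¹).map (Matrix.permMatrixHom (R := R))

section SignDiagonal

variable {n : Type*} [DecidableEq n]

/-- The diagonal matrix of signs with entry `-1` at the indices satisfying `p` and `1` elsewhere;
it is the matrix `δ` when `p j` is `j < i`. -/
def signDiagonal (R : Type*) [Ring R] (p : n → Prop) [DecidablePred p] : Matrix n n R :=
  Matrix.diagonal fun j => if p j then -1 else 1

variable [Fintype n]

theorem signDiagonal_mul_self (R : Type*) [Ring R] (p : n → Prop) [DecidablePred p] :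
    signDiagonal R p * signDiagonal R p = 1 := by
  rw [signDiagonal, Matrix.diagonal_mul_diagonal, ← Matrix.diagonal_one]
  congr 1
  funext j
  split_ifs <;> simp

variable {R : Type*} [CommRing R] {p : n → Prop} [DecidablePred p]

theorem inv_signDiagonal : (signDiagonal R p)⁻¹ = signDiagonal R p :=
  Matrix.inv_eq_right_inv (signDiagonal_mul_self R p)

theorem signDiagonal_conj_apply (α : Matrix n n R) (a b : n) :
    (signDiagonal R p * α * (signDiagonal R p)⁻¹) a b =
      if (p a ↔ p b) then α a b else -α a b := by
  rw [inv_signDiagonal, signDiagonal, Matrix.mul_diagonal, Matrix.diagonal_mul]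
  by_cases ha : p a <;> by_cases hb : p b <;> simp [ha, hb]

theorem signDiagonal_conj_eq_neg_iff {α : Matrix n n R} :
    signDiagonal R p * α * (signDiagonal R p)⁻¹ = -α ↔
      ∀ a b, (p a ↔ p b) → 2 * α a b = 0 := by
  rw [← Matrix.ext_iff]
  refine forall₂_congr fun a b => ?_
  rw [signDiagonal_conj_apply, Matrix.neg_apply, ite_eq_right_iff, eq_neg_iff_add_eq_zero, two_mul]

theorem card_eq_card_not_of_signDiagonal_conj_eq_neg {α : Matrix n n R} (hdet : 2 * α.det ≠ 0)
    (hα : signDiagonal R p * α * (signDiagonal R p)⁻¹ = -α) :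
    Fintype.card {j // p j} = Fintype.card {j // ¬p j} := by
  obtain ⟨σ, hσ⟩ := exists_perm_forall_mul_apply_ne_zero hdet
  have hswap : ∀ j, p j ↔ ¬p (σ j) := fun j => by
    have := mt (signDiagonal_conj_eq_neg_iff.mp hα (σ j) j) (hσ j)
    tauto
  exact Fintype.card_congr (σ.subtypeEquiv hswap)

theorem signDiagonal_conj_permMatrix {σ : Equiv.Perm n} (hσ : ∀ a, p (σ a) ↔ ¬p a) :
    signDiagonal R p * σ.permMatrix R * (signDiagonal R p)⁻¹ = -σ.permMatrix R := by
  refine signDiagonal_conj_eq_neg_iff.mpr fun a b hab => ?_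
  have hne : σ a ≠ b := by
    rintro rfl
    have := hσ a
    tauto
  simp [PEquiv.toMatrix_apply, hne]

end SignDiagonal

section HalfSwap

variable {m i : ℕ}

/-- The permutation exchanging the two halves of `Fin m` by translation by `i = m / 2`; its
permutation matrix is the block matrix `w`. The size `m` is kept as a variable, with `m = i + i` as
a hypothesis, so that this matrix has the same type as `w`. -/
def halfSwap (h : m = i + i) : Equiv.Perm (Fin m) :=
  (finCongr h.symm).permCongr finAddFlip

theorem halfSwap_apply_eq_iff (h : m = i + i) (a b : Fin m) :
    halfSwap h a = b ↔ (a : ℕ) + i = b ∨ (b : ℕ) + i = a := by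
  subst h
  have hb := b.isLt
  induction a using Fin.addCases with
  | left k =>
    simp only [halfSwap, finCongr_refl, Equiv.permCongr_apply, Equiv.refl_symm, Equiv.refl_apply,
      finAddFlip_apply_castAdd, Fin.ext_iff, Fin.val_natAdd, Fin.val_castAdd]
    omega
  | right k =>
    simp only [halfSwap, finCongr_refl, Equiv.permCongr_apply, Equiv.refl_symm, Equiv.refl_apply,
      finAddFlip_apply_natAdd, Fin.ext_iff, Fin.val_natAdd, Fin.val_castAdd]
    omega

theorem halfSwap_apply_lt_iff (h : m = i + i) (a : Fin m) :
    (halfSwap h a : ℕ) < i ↔ ¬(a : ℕ) < i := by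
  have := (halfSwap_apply_eq_iff h a _).mp rfl
  omega

theorem permMatrix_halfSwap (R : Type*) [Zero R] [One R] (h : m = i + i) :
    (halfSwap h).permMatrix R = Matrix.of fun a b : Fin m =>
      if (a : ℕ) + i = (b : ℕ) ∨ (b : ℕ) + i = (a : ℕ) then (1 : R) else 0 := by
  ext a b
  simp [PEquiv.toMatrix_apply, halfSwap_apply_eq_iff]

end HalfSwap

theorem card_lt_eq_card_not_lt_iff {m i : ℕ} (him : i ≤ m) :
    Fintype.card {j : Fin m // (j : ℕ) < i} = Fintype.card {j : Fin m // ¬(j : ℕ) < i} ↔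
      m = 2 * i := by
  rw [Fintype.card_subtype_compl, Fintype.card_subtype, Fin.card_filter_val_lt, Fintype.card_fin]
  omega

theorem stmt_8_general {R : Type*} [CommRing R] (h2 : (2 : R) ≠ 0)
    (m i : ℕ) (him : i ≤ m)
    (δ : Matrix (Fin m) (Fin m) R)
    (hδ : δ = Matrix.diagonal fun j : Fin m => if (j : ℕ) < i then (-1 : R) else 1)
    (w : Matrix (Fin m) (Fin m) R)
    (hw : w = Matrix.of fun a b : Fin m =>
      if (a : ℕ) + i = (b : ℕ) ∨ (b : ℕ) + i = (a : ℕ) then (1 : R) else 0) :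
    ((∃ α : Matrix (Fin m) (Fin m) R, IsUnit α ∧ δ * α * δ⁻¹ = -α) ↔ m = 2 * i) ∧
      (m = 2 * i → IsUnit w ∧ δ * w * δ⁻¹ = -w) := by
  change δ = signDiagonal R fun j : Fin m => (j : ℕ) < i at hδ
  have w_spec (h : m = 2 * i) : IsUnit w ∧ δ * w * δ⁻¹ = -w := by
    rw [two_mul] at h
    rw [hδ, hw, ← permMatrix_halfSwap R h]
    exact ⟨isUnit_permMatrix _, signDiagonal_conj_permMatrix (halfSwap_apply_lt_iff h)⟩
  refine ⟨⟨?_, fun h => ⟨w, w_spec h⟩⟩, w_spec⟩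
  rintro ⟨α, hunit, hα⟩
  rw [hδ] at hα
  have hdet : 2 * α.det ≠ 0 :=
    mt ((α.isUnit_iff_isUnit_det.mp hunit).mul_left_eq_zero).mp h2
  exact (card_lt_eq_card_not_lt_iff him).mp (card_eq_card_not_of_signDiagonal_conj_eq_neg hdet hα)

/-- Let `𝔽` be a finite field of odd characteristic, let `m ≥ 1` and `0 ≤ i ≤ m` be
integers, and let `δ ∈ GL_m(𝔽)` be the diagonal matrix whose first `i` diagonal entries
equal `−1` and whose remaining `m − i` diagonal entries equal `1`. Then there exists
`α ∈ GL_m(𝔽)` with `δ·α·δ⁻¹ = −α` if and only if `m = 2i`. Moreover, when `m = 2i`,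
the block matrix `w = [[0, Id_i],[Id_i, 0]] ∈ GL_m(𝔽)` satisfies `δ·w·δ⁻¹ = −w`. -/
theorem stmt_8 (𝔽 : Type*) [Field 𝔽] [Fintype 𝔽]
    (p : ℕ) [Fact p.Prime] [CharP 𝔽 p] (hp : Odd p)
    (m i : ℕ) (hm : 1 ≤ m) (him : i ≤ m)
    (δ : Matrix (Fin m) (Fin m) 𝔽)
    (hδ : δ = Matrix.diagonal fun j : Fin m => if (j : ℕ) < i then (-1 : 𝔽) else 1)
    (w : Matrix (Fin m) (Fin m) 𝔽)
    (hw : w = Matrix.of fun a b : Fin m =>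
      if (a : ℕ) + i = (b : ℕ) ∨ (b : ℕ) + i = (a : ℕ) then (1 : 𝔽) else 0) :
    ((∃ α : Matrix (Fin m) (Fin m) 𝔽, IsUnit α ∧ δ * α * δ⁻¹ = -α) ↔ m = 2 * i) ∧
      (m = 2 * i → IsUnit w ∧ δ * w * δ⁻¹ = -w) := by
  have h2 : (2 : 𝔽) ≠ 0 := Ring.two_ne_zero (ringChar.eq 𝔽 p ▸ hp.ne_two_of_dvd_nat dvd_rfl)
  exact stmt_8_general h2 m i him δ hδ w hw
end

section
/- Let F ⊆ E ⊆ K be finite fields of odd characteristic with [K : E] = 2, and set Q = |E|. Let α ∈ Kˣ be such that α ∉ E but α² ∈ E. Then N_{K/F}(α) is a square in F if and only if Q ≡ 3 (mod 4), i.e., if and only if (Q+1)/2 is even. -/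
/-!
The norm of an extension of finite fields is surjective, and the nonzero squares of a finite field
have index at most two, so an element is a square as soon as its norm is. By transitivity of the
norm, the question becomes whether `N_{K/E}(α) = -α²` is a square in `E`. As `α²` is a nonsquare
of `E`, this happens exactly when `-1` is a nonsquare of `E`.
-/

open Module IntermediateField Polynomial

section Radical

variable {K L : Type*} [Field K] [Field L] [Algebra K L]

theorem adjoin_simple_eq_top_of_finrank_prime (hp : (finrank K L).Prime) {x : L}
    (hx : x ∉ Set.range (algebraMap K L)) : K⟮x⟯ = ⊤ := by
  have := isSimpleOrder_of_finrank_prime K L hp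
  refine (eq_bot_or_eq_top K⟮x⟯).resolve_left fun h ↦ hx ?_
  rwa [adjoin_simple_eq_bot_iff, mem_bot] at h

variable [FiniteDimensional K L]

theorem norm_eq_coeff_zero_minpoly_of_adjoin_eq_top {x : L} (hx : K⟮x⟯ = ⊤) :
    Algebra.norm K x = (-1) ^ finrank K L * (minpoly K x).coeff 0 := by
  have hint : IsIntegral K x := .of_finite K x
  have hgen : Algebra.adjoin K {x} = ⊤ :=
    (adjoin_simple_eq_top_iff_of_isAlgebraic hint.isAlgebraic).mp hx
  have hnorm := Algebra.PowerBasis.norm_gen_eq_coeff_zero_minpoly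
    (PowerBasis.ofAdjoinEqTop hint hgen)
  rwa [← PowerBasis.finrank, PowerBasis.ofAdjoinEqTop_gen] at hnorm

theorem minpoly_eq_X_pow_sub_C_of_adjoin_eq_top {x : L} (hx : K⟮x⟯ = ⊤) {a : K}
    (ha : x ^ finrank K L = algebraMap K L a) : minpoly K x = X ^ finrank K L - C a :=
  (minpoly.eq_of_irreducible_of_monic (irreducible_X_pow_sub_C_of_root_adjoin_eq_top ha hx)
    (by simp [ha]) (monic_X_pow_sub_C a finrank_pos.ne')).symm

theorem norm_eq_of_pow_finrank_eq {x : L} (hx : K⟮x⟯ = ⊤) {a : K}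
    (ha : x ^ finrank K L = algebraMap K L a) :
    Algebra.norm K x = (-1) ^ (finrank K L + 1) * a := by
  have hcoeff : (X ^ finrank K L - C a).coeff 0 = -a := by
    simp [coeff_X_pow, finrank_pos.ne]
  rw [norm_eq_coeff_zero_minpoly_of_adjoin_eq_top hx,
    minpoly_eq_X_pow_sub_C_of_adjoin_eq_top hx ha, hcoeff]
  ring

end Radical

theorem not_isSquare_of_sq_eq_algebraMap {R A : Type*} [CommRing R] [CommRing A]
    [NoZeroDivisors A] [Algebra R A] {x : A} (hx : x ∉ Set.range (algebraMap R A)) {a : R}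
    (ha : x ^ 2 = algebraMap R A a) : ¬IsSquare a := by
  rintro ⟨b, rfl⟩
  rw [map_mul, ← sq] at ha
  rcases sq_eq_sq_iff_eq_or_eq_neg.mp ha with h | h
  · exact hx ⟨b, h.symm⟩
  · exact hx ⟨-b, by rw [map_neg, h]⟩

theorem isSquare_mul_iff_not_isSquare {F : Type*} [Field F] [Finite F] {a b : F}
    (ha : ¬IsSquare a) (hb : b ≠ 0) : IsSquare (a * b) ↔ ¬IsSquare b := by
  classical
  have := Fintype.ofFinite F
  have ha₀ : a ≠ 0 := fun h ↦ ha (h ▸ .zero)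
  rw [← quadraticChar_neg_one_iff_not_isSquare] at ha ⊢
  rw [← quadraticChar_one_iff_isSquare (mul_ne_zero ha₀ hb), map_mul, ha, neg_one_mul,
    neg_eq_iff_eq_neg]

theorem isSquare_norm_iff {F L : Type*} [Field F] [Field L] [Algebra F L] [Finite L]
    {x : L} : IsSquare (Algebra.norm F x) ↔ IsSquare x := by
  have : Finite F := .of_injective _ (algebraMap F L).injective
  refine ⟨fun hnorm ↦ ?_, fun hx ↦ hx.map (Algebra.norm F)⟩
  by_contra hx
  have hchar : ringChar F ≠ 2 := fun h ↦
    hx (FiniteField.isSquare_of_char_two (Algebra.ringChar_eq F L ▸ h) x)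
  obtain ⟨c, hc⟩ := FiniteField.exists_nonsquare hchar
  obtain ⟨y, rfl⟩ := FiniteField.norm_surjective F L c
  have hy : ¬IsSquare y := fun h ↦ hc (h.map (Algebra.norm F))
  have hy₀ : y ≠ 0 := fun h ↦ hy (h ▸ .zero)
  have hxy : IsSquare (x * y) := (isSquare_mul_iff_not_isSquare hx hy₀).mpr hy
  have hx₀ : Algebra.norm F x ≠ 0 := Algebra.norm_ne_zero_iff.mpr fun h ↦ hx (h ▸ .zero)
  have hdiv : Algebra.norm F (x * y) / Algebra.norm F x = Algebra.norm F y := by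
    rw [map_mul, mul_div_cancel_left₀ _ hx₀]
  exact hc (hdiv ▸ (hxy.map (Algebra.norm F)).div hnorm)

/-- Let `F ⊆ E ⊆ K` be finite fields of odd characteristic with `[K : E] = 2`, and set
`Q = |E|`. Let `α ∈ Kˣ` be such that `α ∉ E` but `α² ∈ E`. Then `N_{K/F}(α)` is a square
in `F` if and only if `Q ≡ 3 (mod 4)`, i.e., if and only if `(Q+1)/2` is even. -/
theorem stmt_9 (F E K : Type*) [Field F] [Field E] [Field K]
    [Algebra F E] [Algebra E K] [Algebra F K] [IsScalarTower F E K]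
    [Fintype F] [Fintype E] [Fintype K]
    (p : ℕ) [Fact p.Prime] [CharP F p] (hp : Odd p)
    (hKE : Module.finrank E K = 2)
    (α : K) (hα : α ∉ Set.range (algebraMap E K)) (hα2 : α ^ 2 ∈ Set.range (algebraMap E K)) :
    (IsSquare (Algebra.norm F α) ↔ Fintype.card E % 4 = 3) ∧
      (Fintype.card E % 4 = 3 ↔ Even ((Fintype.card E + 1) / 2)) := by
  obtain ⟨a, ha⟩ := hα2
  have ha_nonsquare : ¬IsSquare a := not_isSquare_of_sq_eq_algebraMap hα ha.symm
  have hgen : E⟮α⟯ = ⊤ := adjoin_simple_eq_top_of_finrank_prime (hKE ▸ Nat.prime_two) hα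
  have hnorm : Algebra.norm E α = a * -1 := by
    rw [norm_eq_of_pow_finrank_eq hgen (hKE ▸ ha.symm), hKE]
    ring
  constructor
  · rw [← Algebra.norm_norm (S := E), isSquare_norm_iff, hnorm,
      isSquare_mul_iff_not_isSquare ha_nonsquare (neg_ne_zero.mpr one_ne_zero),
      FiniteField.isSquare_neg_one_iff, not_not]
  · have : CharP E p := charP_of_injective_algebraMap (algebraMap F E).injective p
    have hchar : ringChar E ≠ 2 := by
      rw [ringChar.eq E p]
      exact hp.ne_two_of_dvd_nat dvd_rfl
    have hodd : Fintype.card E % 2 = 1 := FiniteField.odd_card_of_char_ne_two hchar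
    rw [Nat.even_iff]
    omega
end

section
/- Let F ⊆ K be finite fields with |F| = q and [K : F] = f, and let φ : K → K denote the q-power Frobenius x ↦ x^q, which generates the cyclic Galois group Gal(K/F) of order f. Let A be an abelian group and ξ : Kˣ → A a group homomorphism, of finite order d in the group of homomorphisms from Kˣ to A. Then: (a) for every integer i ≥ 0, ξ ∘ φ^i = ξ if and only if d divides q^i − 1; (b) ξ ∘ σ ≠ ξ for every nontrivial σ ∈ Gal(K/F) if and only if the multiplicative order of q modulo d equals f. -/
/-!
Raising arguments to the `n`-th power turns `ξ` into `ξ ^ n`, so `φ ^ i` fixes `ξ` exactly when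
`q ^ i ≡ 1` modulo the order `d` of `ξ`, that is, when the order of `q` modulo `d` divides `i`.
The stabilizer of `ξ` in the cyclic group generated by `φ` is therefore generated by `φ ^ e` with
`e` the order of `q` modulo `d`; it is trivial precisely when `e` is the order `f` of `φ`.
-/

section PowerMap

variable {G A : Type*} [CommMonoid A]

theorem isOfFinOrder_monoidHom [Group G] [Finite G] (ξ : G →* A) : IsOfFinOrder ξ :=
  isOfFinOrder_iff_pow_eq_one.2 ⟨Nat.card G, Nat.card_pos, MonoidHom.ext fun x ↦ by
    rw [MonoidHom.pow_apply, ← map_pow, pow_card_eq_one', map_one, MonoidHom.one_apply]⟩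

variable [Monoid G] {ξ : G →* A}

theorem forall_map_pow_eq_iff_modEq (hξ : IsOfFinOrder ξ) {n : ℕ} :
    (∀ x, ξ (x ^ n) = ξ x) ↔ n ≡ 1 [MOD orderOf ξ] := by
  rw [← hξ.pow_eq_pow_iff_modEq, pow_one, MonoidHom.ext_iff]
  simp only [MonoidHom.pow_apply, map_pow]

theorem forall_map_pow_eq_iff_dvd_sub_one (hξ : IsOfFinOrder ξ) {n : ℕ} (hn : 1 ≤ n) :
    (∀ x, ξ (x ^ n) = ξ x) ↔ orderOf ξ ∣ n - 1 := by
  rw [forall_map_pow_eq_iff_modEq hξ, Nat.ModEq.comm, Nat.modEq_iff_dvd' hn]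

theorem forall_map_pow_pow_eq_iff_orderOf_dvd (hξ : IsOfFinOrder ξ) {q i : ℕ} :
    (∀ x, ξ (x ^ q ^ i) = ξ x) ↔ orderOf (q : ZMod (orderOf ξ)) ∣ i := by
  rw [forall_map_pow_eq_iff_modEq hξ, ← ZMod.natCast_eq_natCast_iff, Nat.cast_pow, Nat.cast_one,
    orderOf_dvd_iff_pow_eq_one]

end PowerMap

section Galois

open FiniteField

variable (F : Type*) {K A : Type*} [Field F] [Field K] [Algebra F K] [CommMonoid A]

/-- A character `ξ` of `Kˣ` is `Gal(K/F)`-regular if no nontrivial element of `Gal(K/F)` fixes it.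
The Galois group acts on `Kˣ` by `σ • x = Units.map σ x`, so `σ` fixes `ξ` when
`ξ (σ • x) = ξ x` for all `x`. -/
def IsGaloisRegular (ξ : Kˣ →* A) : Prop :=
  ∀ σ : K ≃ₐ[F] K, σ ≠ 1 → ∃ x : Kˣ, ξ (σ • x) ≠ ξ x

variable [Fintype F]

theorem frobenius_pow_smul_units [Algebra.IsAlgebraic F K] (i : ℕ) (x : Kˣ) :
    (frobeniusAlgEquivOfAlgebraic F K ^ i) • x = x ^ Fintype.card F ^ i := by
  ext
  simp [AlgEquiv.smul_units_def, AlgEquiv.coe_pow, coe_frobeniusAlgEquivOfAlgebraic_iterate]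

theorem forall_map_frobenius_pow_smul_eq_iff [Algebra.IsAlgebraic F K] {ξ : Kˣ →* A}
    (hξ : IsOfFinOrder ξ) {i : ℕ} :
    (∀ x, ξ ((frobeniusAlgEquivOfAlgebraic F K ^ i) • x) = ξ x) ↔
      orderOf (Fintype.card F : ZMod (orderOf ξ)) ∣ i := by
  simp only [frobenius_pow_smul_units, forall_map_pow_pow_eq_iff_orderOf_dvd hξ]

theorem isGaloisRegular_iff_orderOf_eq_finrank [Finite K] (ξ : Kˣ →* A) :
    IsGaloisRegular F ξ ↔
      orderOf (Fintype.card F : ZMod (orderOf ξ)) = Module.finrank F K := by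
  have fixed_iff (i : ℕ) :=
    forall_map_frobenius_pow_smul_eq_iff F (isOfFinOrder_monoidHom ξ) (i := i)
  rw [← orderOf_frobeniusAlgEquivOfAlgebraic F K]
  constructor
  · intro hreg
    apply Nat.dvd_antisymm
    · rw [← fixed_iff, pow_orderOf_eq_one]
      exact fun x ↦ by rw [one_smul]
    · apply orderOf_dvd_of_pow_eq_one
      by_contra hne
      obtain ⟨x, hx⟩ := hreg _ hne
      exact hx ((fixed_iff _).2 dvd_rfl x)
  · intro horder σ hσ
    obtain ⟨i, rfl⟩ := (bijective_frobeniusAlgEquivOfAlgebraic_pow F K).surjective σ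
    by_contra! hfix
    exact hσ (orderOf_dvd_iff_pow_eq_one.1 (horder ▸ (fixed_iff _).1 hfix))

theorem stmt_10_general [Finite K] (ξ : Kˣ →* A) :
    (∀ i : ℕ, (∀ x : Kˣ, ξ (x ^ Fintype.card F ^ i) = ξ x) ↔
      orderOf ξ ∣ Fintype.card F ^ i - 1) ∧
    (IsGaloisRegular F ξ ↔
      orderOf (Fintype.card F : ZMod (orderOf ξ)) = Module.finrank F K) :=
  ⟨fun i ↦ forall_map_pow_eq_iff_dvd_sub_one (isOfFinOrder_monoidHom ξ)
      (Nat.one_le_pow i _ Fintype.card_pos),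
    isGaloisRegular_iff_orderOf_eq_finrank F ξ⟩

end Galois

/-- Let `F ⊆ K` be finite fields with `|F| = q` and `[K : F] = f`, and let
`φ : K → K` denote the `q`-power Frobenius `x ↦ x^q` (which generates the cyclic Galois
group `Gal(K/F)` of order `f`). Let `A` be an abelian group and `ξ : Kˣ → A` a group
homomorphism, of finite order `d` in the group of homomorphisms from `Kˣ` to `A`. Then:
(a) for every integer `i ≥ 0`, `ξ ∘ φ^i = ξ` if and only if `d` divides `q^i − 1`;
(b) `ξ ∘ σ ≠ ξ` for every nontrivial `σ ∈ Gal(K/F)` if and only if the multiplicative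
order of `q` modulo `d` equals `f`. -/
theorem stmt_10 (F K : Type*) [Field F] [Field K] [Algebra F K] [Fintype F] [Fintype K]
    (q f : ℕ) (hq : Fintype.card F = q) (hf : Module.finrank F K = f)
    (A : Type*) [CommGroup A] (ξ : Kˣ →* A) (d : ℕ) (hd0 : 0 < d) (hd : orderOf ξ = d) :
    (∀ i : ℕ, (∀ x : Kˣ, ξ (x ^ q ^ i) = ξ x) ↔ d ∣ q ^ i - 1) ∧
    ((∀ σ : K ≃ₐ[F] K, σ ≠ AlgEquiv.refl →
        ∃ x : Kˣ, ξ (Units.map σ.toAlgHom.toRingHom.toMonoidHom x) ≠ ξ x) ↔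
      orderOf (q : ZMod d) = f) := by
  subst hq hf hd
  exact stmt_10_general F ξ
end
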